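/- Let k ∈ {3, 4, 6} and let ξ ∈ ℂ be a primitive k-th root of unity. Let Λ be a nonzero additive subgroup of ℂ such that ξ·Λ ⊆ Λ, and suppose that Λ is contained in a ℚ-linear subspace of ℂ (viewing ℂ as a vector space over ℚ) of dimension at most 2. Then there exists a nonzero c ∈ ℂ such that c·Λ ⊆ ℚ + ℚξ, i.e. after multiplying by c every element of Λ is a ℚ-linear combination of 1 and ξ. -/

import Mathlib

/-!
For nonzero `w ∈ Λ`, the vectors `w` and `ξ * w` of the plane containing `Λ` are linearly
independent because `ξ` is not a scalar. They therefore span the plane, and multiplication by `w⁻¹`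
sends them to `1` and `ξ`.
-/

theorem rank_span_pair_le {R M : Type*} [Semiring R] [StrongRankCondition R]
    [AddCommMonoid M] [Module R M] (x y : M) : Module.rank R (Submodule.span R {x, y}) ≤ 2 :=
  calc Module.rank R (Submodule.span R {x, y})
    _ ≤ Cardinal.mk ({x, y} : Set M) := rank_span_le _
    _ ≤ Cardinal.mk ({y} : Set M) + 1 := Cardinal.mk_insert_le
    _ = 2 := by rw [Cardinal.mk_singleton, one_add_one_eq_two]

theorem span_pair_eq_of_linearIndependent_of_rank_le_two {K M : Type*} [DivisionRing K]
    [AddCommGroup M] [Module K M] {V : Submodule K M} {x y : M}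
    (hxy : LinearIndependent K ![x, y]) (hx : x ∈ V) (hy : y ∈ V) (hV : Module.rank K V ≤ 2) :
    Submodule.span K {x, y} = V := by
  have : FiniteDimensional K V :=
    Module.rank_lt_aleph0_iff.1 (hV.trans_lt (Cardinal.natCast_lt_aleph0 (n := 2)))
  refine Submodule.eq_of_le_of_finrank_le (Submodule.span_le.2 (Set.pair_subset hx hy)) ?_
  calc Module.finrank K V
    _ ≤ 2 := Module.finrank_le_of_rank_le hV
    _ = Module.finrank K (Submodule.span K {x, y}) := by
      rw [← Matrix.range_cons_cons_empty x y ![], finrank_span_eq_card hxy, Fintype.card_fin]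

theorem linearIndependent_pair_mul_left {K L : Type*} [Field K] [Ring L] [IsDomain L]
    [Algebra K L] {ξ w : L} (hξ : ξ ∉ Set.range (algebraMap K L)) (hw : w ≠ 0) :
    LinearIndependent K ![w, ξ * w] := by
  refine (LinearIndependent.pair_iff' hw).2 fun t ht => hξ ⟨t, mul_right_cancel₀ hw ?_⟩
  rwa [← Algebra.smul_def]

theorem notMem_range_algebraMap_of_pow_eq_one {K L : Type*} [Field K] [LinearOrder K]
    [IsStrictOrderedRing K] [Ring L] [Nontrivial L] [Algebra K L] {ξ : L} {n : ℕ} (hn : n ≠ 0)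
    (hξ : ξ ^ n = 1) (hsq : ξ ^ 2 ≠ 1) : ξ ∉ Set.range (algebraMap K L) := by
  rintro ⟨t, rfl⟩
  have ht : t ^ n = 1 := (algebraMap K L).injective (by rw [map_pow, hξ, map_one])
  obtain rfl | ⟨rfl, -⟩ := (pow_eq_one_iff_cases.1 ht).resolve_left hn <;> simp at hsq

theorem stmt_4_general {K L : Type*} [Field K] [Field L] [Algebra K L] {ξ : L}
    (hξ : ξ ∉ Set.range (algebraMap K L)) {Λ : AddSubgroup L} (hΛ : Λ ≠ ⊥)
    (hinv : ∀ z ∈ Λ, ξ * z ∈ Λ) {V : Submodule K L} (hV : Module.rank K V ≤ 2)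
    (hΛV : ∀ z ∈ Λ, z ∈ V) :
    ∃ c : L, c ≠ 0 ∧ ∀ z ∈ Λ, ∃ q r : K, c * z = algebraMap K L q + algebraMap K L r * ξ := by
  obtain ⟨w, hw, hw₀⟩ := Λ.bot_or_exists_ne_zero.resolve_left hΛ
  have hspan : Submodule.span K {w, ξ * w} = V :=
    span_pair_eq_of_linearIndependent_of_rank_le_two (linearIndependent_pair_mul_left hξ hw₀)
      (hΛV w hw) (hΛV _ (hinv w hw)) hV
  refine ⟨w⁻¹, inv_ne_zero hw₀, fun z hz => ?_⟩
  obtain ⟨q, r, rfl⟩ := Submodule.mem_span_pair.1 (hspan ▸ hΛV z hz)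
  refine ⟨q, r, ?_⟩
  simp only [Algebra.smul_def]
  field_simp

/-- For k ∈ {3,4,6} and ξ a primitive k-th root of unity: a nonzero ξ-invariant
additive subgroup of ℂ contained in a ℚ-subspace of dimension at most 2 can be
scaled by some nonzero c ∈ ℂ to lie in ℚ + ℚξ. -/
theorem stmt_4 (k : ℕ) (hk : k ∈ ({3, 4, 6} : Set ℕ)) (ξ : ℂ)
    (hξ : ξ ^ k = 1) (hprim : ∀ j : ℕ, 0 < j → j < k → ξ ^ j ≠ 1)
    (Λ : AddSubgroup ℂ) (hΛ : Λ ≠ ⊥) (hinv : ∀ z ∈ Λ, ξ * z ∈ Λ)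
    (a b : ℂ) (hspan : ∀ z ∈ Λ, ∃ q r : ℚ, z = q • a + r • b) :
    ∃ c : ℂ, c ≠ 0 ∧ ∀ z ∈ Λ, ∃ q r : ℚ, c * z = (q : ℂ) + (r : ℂ) * ξ := by
  have hk₂ : 2 < k := by rcases hk with rfl | rfl | rfl <;> norm_num
  have hξ_irrational : ξ ∉ Set.range (algebraMap ℚ ℂ) :=
    notMem_range_algebraMap_of_pow_eq_one (by lia) hξ (hprim 2 two_pos hk₂)
  have hΛ_span : ∀ z ∈ Λ, z ∈ Submodule.span ℚ {a, b} := by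
    simpa only [Submodule.mem_span_pair, eq_comm] using hspan
  exact stmt_4_general hξ_irrational hΛ hinv (rank_span_pair_le a b) hΛ_span
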